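/- Let Ω be a class of C*-algebras and let Ω₁ be the class of unital C*-algebras consisting of all C*-algebras isomorphic either to a unital algebra in Ω or to the unitization of an algebra in Ω. If A is a simple unital C*-algebra and A belongs to the class GTAΩ, then A belongs to the class WTAΩ₁. -/

import Mathlib

open Filter Topology

/-- An element of a C*-algebra is positive if it is of the form `x* x`. -/
def IsPos {A : Type*} [Mul A] [Star A] (a : A) : Prop := ∃ x : A, a = star x * x

/-- Cuntz subequivalence `a ≾_A b`. -/
def CuntzBelow {A : Type*} [NonUnitalNormedRing A] [Star A] (a b : A) : Prop :=
  ∃ v : ℕ → A, Tendsto (fun n => ‖v n * b * star (v n) - a‖) atTop (nhds 0)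

/-- `x ∈_ε S`: `x` lies within `ε` of the set `S`. -/
def ApproxIn {A : Type*} [NormedAddGroup A] (x : A) (S : Set A) (ε : ℝ) : Prop :=
  ∃ y ∈ S, ‖x - y‖ < ε

/-- `(a - ε)₊`, via continuous functional calculus. -/
noncomputable def CutPos {A : Type*} [CStarAlgebra A] (a : A) (ε : ℝ) : A :=
  cfc (fun t : ℝ => max (t - ε) 0) a

/-- A C*-algebra is simple if it is nontrivial and has no proper nontrivial
closed two-sided ideals. -/
def IsSimpleCStarAlgebra (A : Type*) [NonUnitalNormedRing A] : Prop :=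
  Nontrivial A ∧ ∀ I : TwoSidedIdeal A, IsClosed (I : Set A) →
    (I : Set A) = {0} ∨ (I : Set A) = Set.univ

variable {A : Type*} [CStarAlgebra A]

/-- Membership in the class `WTAΩ` (Elliott–Fan–Fang weak tracial approximation),
where the class `Ω` is modelled as a set of (C*-)subalgebras of `A`. -/
def MemWTA (Ω : Set (NonUnitalStarSubalgebra ℂ A)) : Prop :=
  ∀ ε : ℝ, 0 < ε → ∀ F : Finset A, ∀ a : A, IsPos a → a ≠ 0 →
    ∃ B ∈ Ω, IsClosed (B : Set A) ∧
      ∃ p ∈ B, IsSelfAdjoint p ∧ p * p = p ∧ (∀ b ∈ B, p * b = b ∧ b * p = b) ∧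
        ∃ g ∈ B, IsPos g ∧ IsPos (1 - g) ∧
          (∀ x ∈ F, ApproxIn ((p - g) * x) (B : Set A) ε ∧
            ApproxIn (x * (p - g)) (B : Set A) ε) ∧
          (∀ x ∈ F, ‖(p - g) * x - x * (p - g)‖ < ε) ∧
          CuntzBelow (1 - (p - g)) a ∧
          ‖a‖ - ε ≤ ‖(p - g) * a * (p - g)‖

/-- Membership in the class `GTAΩ` (generalized/weak tracial approximation),
where the class `Ω` is modelled as a set of (C*-)subalgebras of `A`. -/
def MemGTA (Ω : Set (NonUnitalStarSubalgebra ℂ A)) : Prop :=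
  ∀ ε : ℝ, 0 < ε → ∀ F : Finset A, ∀ a b : A, IsPos a → ‖a‖ = 1 → IsPos b → ‖b‖ ≤ 1 →
    ∃ B ∈ Ω, IsClosed (B : Set A) ∧
      ∃ r ∈ B, IsPos r ∧ ‖r‖ ≤ 1 ∧
        (∀ x ∈ F, ApproxIn (r * x) (B : Set A) ε ∧ ApproxIn (x * r) (B : Set A) ε) ∧
        (∀ x ∈ F, ‖r * x - x * r‖ < ε) ∧
        CuntzBelow (CutPos (b * b - b * r * b) ε) a ∧
        1 - ε ≤ ‖r * a * r‖

/-! Condition `GTA` for `b = 1` and `a` normalized yields `C ∈ Ω` and a positive contraction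
`r ∈ C` with `(1 - r - δ)₊ ⪯ a`. Put `g = (1 - r - δ)₊` and `s = 1 - g`. Then `0 ≤ s ≤ 1` because
`0 ≤ g ≤ 1 - r`, and `‖s - r‖ ≤ δ` because `t ↦ (t - δ)₊` moves points of `[0, ∞)` by at most `δ`.
Hence `s` inherits from `r`, up to multiples of `δ`, the approximation conditions and the lower
bound on `‖r a r‖`, while `1 - s = g ⪯ a` holds exactly. The algebra `B = C + ℂ 1` contains `s` and
has unit `p = 1`; it is `C` itself if `1 ∈ C`, and otherwise a copy of the unitization of `C`. -/

section Approximation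

variable {R : Type*}

lemma ApproxIn.mono [NormedAddGroup R] {x : R} {S T : Set R} {ε η : ℝ} (h : ApproxIn x S ε)
    (hST : S ⊆ T) (hεη : ε ≤ η) : ApproxIn x T η := by
  obtain ⟨y, hy, hxy⟩ := h
  exact ⟨y, hST hy, hxy.trans_le hεη⟩

lemma ApproxIn.of_norm_sub_le [NormedAddGroup R] {x y : R} {S : Set R} {δ ε : ℝ}
    (h : ApproxIn x S ε) (hyx : ‖y - x‖ ≤ δ) : ApproxIn y S (δ + ε) := by
  obtain ⟨z, hz, hxz⟩ := h
  exact ⟨z, hz, (norm_sub_le_norm_sub_add_norm_sub y x z).trans_lt (add_lt_add_of_le_of_lt hyx hxz)⟩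

variable {r s : R} {δ : ℝ}

lemma norm_mul_sub_mul_right_le [NonUnitalSeminormedRing R] (h : ‖s - r‖ ≤ δ) (x : R) :
    ‖s * x - r * x‖ ≤ δ * ‖x‖ := by
  rw [← sub_mul]
  exact norm_mul_le_of_le h le_rfl

lemma norm_mul_sub_mul_left_le [NonUnitalSeminormedRing R] (h : ‖s - r‖ ≤ δ) (x : R) :
    ‖x * s - x * r‖ ≤ δ * ‖x‖ := by
  rw [← mul_sub, mul_comm δ]
  exact norm_mul_le_of_le le_rfl h

lemma norm_commutator_le_add [NonUnitalSeminormedRing R] (h : ‖s - r‖ ≤ δ) (x : R) :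
    ‖s * x - x * s‖ ≤ ‖r * x - x * r‖ + 2 * (δ * ‖x‖) := by
  have hright := norm_mul_sub_mul_right_le h x
  have hleft := norm_mul_sub_mul_left_le h x
  calc ‖s * x - x * s‖ = ‖(r * x - x * r) + ((s * x - r * x) - (x * s - x * r))‖ := by
        congr 1; abel
    _ ≤ ‖r * x - x * r‖ + (‖s * x - r * x‖ + ‖x * s - x * r‖) :=
        (norm_add_le _ _).trans (by gcongr; exact norm_sub_le _ _)
    _ ≤ ‖r * x - x * r‖ + 2 * (δ * ‖x‖) := by linarith

lemma norm_compression_le_add [NonUnitalSeminormedRing R] (hr : ‖r‖ ≤ 1) (hs : ‖s‖ ≤ 1)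
    (h : ‖s - r‖ ≤ δ) (a : R) : ‖r * a * r‖ ≤ ‖s * a * s‖ + 2 * (δ * ‖a‖) := by
  have hδ : 0 ≤ δ := (norm_nonneg _).trans h
  have hright : ‖(s - r) * a * r‖ ≤ δ * ‖a‖ * 1 := norm_mul₃_le.trans (by gcongr)
  have hleft : ‖s * a * (s - r)‖ ≤ 1 * ‖a‖ * δ := norm_mul₃_le.trans (by gcongr)
  calc ‖r * a * r‖ = ‖s * a * s - ((s - r) * a * r + s * a * (s - r))‖ := by
        congr 1; noncomm_ring
    _ ≤ ‖s * a * s‖ + (‖(s - r) * a * r‖ + ‖s * a * (s - r)‖) :=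
        (norm_sub_le _ _).trans (by gcongr; exact norm_add_le _ _)
    _ ≤ ‖s * a * s‖ + 2 * (δ * ‖a‖) := by linarith

lemma exists_pos_forall_mul_le {ι : Type*} (I : Finset ι) (f : ι → ℝ) {ε : ℝ} (hε : 0 < ε) :
    ∃ δ > 0, ∀ i ∈ I, δ * f i ≤ ε := by
  have hsmall : ∀ᶠ δ in 𝓝[>] (0 : ℝ), ∀ i ∈ I, δ * f i < ε := by
    refine (eventually_all_finset I).2 fun i _ => Tendsto.eventually_lt_const hε ?_
    have : Continuous fun δ : ℝ => δ * f i := by fun_prop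
    simpa using (this.tendsto 0).mono_left nhdsWithin_le_nhds
  obtain ⟨δ, hδ, hδ0⟩ := (hsmall.and self_mem_nhdsWithin).exists
  exact ⟨δ, hδ0, fun i hi => (hδ i hi).le⟩

end Approximation

lemma CuntzBelow.of_smul_right {R : Type*} [NonUnitalNormedRing R] [Star R] [MulAction ℝ R]
    [StarModule ℝ R] [IsScalarTower ℝ R R] [SMulCommClass ℝ R R] {a b : R} {t : ℝ} (ht : 0 ≤ t)
    (h : CuntzBelow a (t • b)) : CuntzBelow a b := by
  obtain ⟨v, hv⟩ := h
  refine ⟨fun n => √t • v n, hv.congr fun n => ?_⟩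
  simp only [star_smul, star_trivial, smul_mul_assoc, mul_smul_comm, smul_smul,
    Real.mul_self_sqrt ht]

section Order

variable [PartialOrder A] [StarOrderedRing A]

lemma isPos_iff_nonneg {a : A} : IsPos a ↔ 0 ≤ a :=
  CStarAlgebra.nonneg_iff_eq_star_mul_self.symm

lemma cutPos_nonneg (c : A) (δ : ℝ) : 0 ≤ CutPos c δ :=
  cfc_nonneg fun _ _ => le_max_right _ _

variable {c : A} {δ : ℝ}

lemma cutPos_le_self (hc : 0 ≤ c) (hδ : 0 ≤ δ) : CutPos c δ ≤ c := by
  conv_rhs => rw [← cfc_id' ℝ c]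
  refine cfc_mono fun t ht => max_le ?_ (spectrum_nonneg_of_nonneg hc ht)
  linarith

lemma norm_sub_cutPos_le (hc : 0 ≤ c) (hδ : 0 ≤ δ) : ‖c - CutPos c δ‖ ≤ δ := by
  have hcfc : c - CutPos c δ = cfc (fun t : ℝ => t - max (t - δ) 0) c := by
    rw [cfc_sub _ _ _ (by fun_prop) (by fun_prop), cfc_id' ℝ c, CutPos]
  rw [hcfc]
  refine norm_cfc_le hδ fun t ht => ?_
  have ht0 : 0 ≤ t := spectrum_nonneg_of_nonneg hc ht
  rw [Real.norm_of_nonneg (sub_nonneg.2 (max_le (by linarith) ht0))]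
  linarith [le_max_left (t - δ) 0]

variable {r : A}

lemma one_sub_cutPos_one_sub_mem_Icc (hr : r ∈ Set.Icc 0 1) (hδ : 0 ≤ δ) :
    1 - CutPos (1 - r) δ ∈ Set.Icc 0 1 :=
  ⟨sub_nonneg.2 ((cutPos_le_self (sub_nonneg.2 hr.2) hδ).trans (sub_le_self 1 hr.1)),
    sub_le_self 1 (cutPos_nonneg _ _)⟩

lemma norm_one_sub_cutPos_one_sub_sub_le (hr : r ≤ 1) (hδ : 0 ≤ δ) :
    ‖1 - CutPos (1 - r) δ - r‖ ≤ δ := by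
  rw [sub_right_comm]
  exact norm_sub_cutPos_le (sub_nonneg.2 hr) hδ

end Order

lemma cutPos_mem_of_isClosed {S : StarSubalgebra ℂ A} (hS : IsClosed (S : Set A)) {c : A}
    (hc : c ∈ S) (δ : ℝ) : CutPos c δ ∈ S :=
  cfc_mem (𝕜' := ℂ) (hs := hS) _ hc

lemma isClosed_adjoin_nonUnitalStarSubalgebra {𝕜 R : Type*} [NontriviallyNormedField 𝕜]
    [CompleteSpace 𝕜] [StarRing 𝕜] [Ring R] [StarRing R] [Algebra 𝕜 R] [StarModule 𝕜 R]
    [TopologicalSpace R] [IsTopologicalAddGroup R] [ContinuousSMul 𝕜 R]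
    {C : NonUnitalStarSubalgebra 𝕜 R} (hC : IsClosed (C : Set R)) :
    IsClosed (StarAlgebra.adjoin 𝕜 (C : Set R) : Set R) := by
  have hsup : ((StarAlgebra.adjoin 𝕜 (C : Set R)).toSubalgebra.toSubmodule : Set R) =
      (C.toSubmodule ⊔ Submodule.span 𝕜 {1} : Submodule 𝕜 R) := by
    rw [StarAlgebra.adjoin_nonUnitalStarSubalgebra_eq_span, sup_comm]
  exact hsup ▸ Submodule.isClosed_sup_finiteDimensional _ _ hC

lemma toNonUnitalStarSubalgebra_adjoin_of_one_mem {𝕜 R : Type*} [CommSemiring 𝕜] [StarRing 𝕜]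
    [Semiring R] [StarRing R] [Algebra 𝕜 R] [StarModule 𝕜 R] {C : NonUnitalStarSubalgebra 𝕜 R}
    (h1 : (1 : R) ∈ C) :
    (StarAlgebra.adjoin 𝕜 (C : Set R)).toNonUnitalStarSubalgebra = C := by
  conv_rhs => rw [← C.toStarSubalgebra_toNonUnitalStarSubalgebra h1]
  exact congrArg _ (StarAlgebra.adjoin_eq (C.toStarSubalgebra h1))

/-- The class `Ω₁` of the paper: the subalgebras that are isomorphic to a unital algebra in `Ω` or
to the unitization of an algebra in `Ω`. `Unitization` adjoins a new unit even to a unital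
algebra. -/
def unitizationClass (Ω : Set (NonUnitalStarSubalgebra ℂ A)) : Set (NonUnitalStarSubalgebra ℂ A) :=
  {B | ∃ C ∈ Ω, ((∃ e ∈ C, ∀ c ∈ C, e * c = c ∧ c * e = c) ∧ Nonempty (B ≃⋆ₐ[ℂ] C)) ∨
    Nonempty (B ≃⋆ₐ[ℂ] Unitization ℂ C)}

lemma adjoin_mem_unitizationClass {Ω : Set (NonUnitalStarSubalgebra ℂ A)}
    {C : NonUnitalStarSubalgebra ℂ A} (hC : C ∈ Ω) :
    (StarAlgebra.adjoin ℂ (C : Set A)).toNonUnitalStarSubalgebra ∈ unitizationClass Ω := by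
  refine ⟨C, hC, ?_⟩
  by_cases h1 : (1 : A) ∈ C
  · rw [toNonUnitalStarSubalgebra_adjoin_of_one_mem h1]
    exact .inl ⟨⟨1, h1, by simp⟩, ⟨.refl ℂ C⟩⟩
  · exact .inr ⟨(NonUnitalStarSubalgebra.unitizationStarAlgEquiv C h1).symm⟩

section TracialApproximation

variable [PartialOrder A] [StarOrderedRing A] {Ω : Set (NonUnitalStarSubalgebra ℂ A)}

lemma MemGTA.exists_of_ne_zero (h : MemGTA Ω) {ε : ℝ} (hε : 0 < ε) (F : Finset A) {a : A}
    (ha : 0 ≤ a) (ha0 : a ≠ 0) :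
    ∃ C ∈ Ω, IsClosed (C : Set A) ∧ ∃ r ∈ C, r ∈ Set.Icc 0 1 ∧
      (∀ x ∈ F, ApproxIn (r * x) (C : Set A) ε ∧ ApproxIn (x * r) (C : Set A) ε) ∧
      (∀ x ∈ F, ‖r * x - x * r‖ < ε) ∧
      CuntzBelow (CutPos (1 - r) ε) a ∧
      (1 - ε) * ‖a‖ ≤ ‖r * a * r‖ := by
  have : Nontrivial A := nontrivial_of_ne a 0 ha0
  have hnorm_pos : 0 < ‖a‖ := norm_pos_iff.2 ha0
  have hnormalized_pos : IsPos (‖a‖⁻¹ • a) := isPos_iff_nonneg.2 (smul_nonneg (by positivity) ha)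
  have hnormalized : ‖‖a‖⁻¹ • a‖ = 1 := by simp [norm_smul, hnorm_pos.ne']
  obtain ⟨C, hCΩ, hC, r, hrC, hr, hr1, happrox, hcomm, hcuntz, hlower⟩ :=
    h ε hε F (‖a‖⁻¹ • a) 1 hnormalized_pos hnormalized ⟨1, by simp⟩ (by simp)
  have hr0 : 0 ≤ r := isPos_iff_nonneg.1 hr
  rw [mul_one, one_mul, mul_one] at hcuntz
  rw [mul_smul_comm, smul_mul_assoc, norm_smul, norm_inv, norm_norm, inv_mul_eq_div,
    le_div_iff₀ hnorm_pos] at hlower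
  exact ⟨C, hCΩ, hC, r, hrC, ⟨hr0, (CStarAlgebra.norm_le_one_iff_of_nonneg r).1 hr1⟩,
    happrox, hcomm, hcuntz.of_smul_right (by positivity), hlower⟩

lemma MemGTA.exists_mem_adjoin_cuntzBelow_one_sub (h : MemGTA Ω) {ε : ℝ} (hε : 0 < ε)
    (F : Finset A) {a : A} (ha : 0 ≤ a) (ha0 : a ≠ 0) :
    ∃ C ∈ Ω, IsClosed (C : Set A) ∧
      ∃ s ∈ StarAlgebra.adjoin ℂ (C : Set A), s ∈ Set.Icc 0 1 ∧
        (∀ x ∈ F, ApproxIn (s * x) (C : Set A) ε ∧ ApproxIn (x * s) (C : Set A) ε) ∧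
        (∀ x ∈ F, ‖s * x - x * s‖ < ε) ∧
        CuntzBelow (1 - s) a ∧
        ‖a‖ - ε ≤ ‖s * a * s‖ := by
  classical
  obtain ⟨δ, hδ, hδε⟩ := exists_pos_forall_mul_le (insert a F) (fun x => 1 + 3 * ‖x‖) hε
  have hδ_nonneg (x : A) : 0 ≤ δ * ‖x‖ := by positivity
  obtain ⟨C, hCΩ, hC, r, hrC, hr, happrox, hcomm, hcuntz, hlower⟩ :=
    h.exists_of_ne_zero hδ F ha ha0
  have hs := one_sub_cutPos_one_sub_mem_Icc hr hδ.le
  have hsr := norm_one_sub_cutPos_one_sub_sub_le hr.2 hδ.le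
  refine ⟨C, hCΩ, hC, 1 - CutPos (1 - r) δ, ?_, hs, fun x hx => ?_, fun x hx => ?_, ?_, ?_⟩
  · have hrB := StarAlgebra.subset_adjoin ℂ (C : Set A) hrC
    exact sub_mem (one_mem _) (cutPos_mem_of_isClosed (isClosed_adjoin_nonUnitalStarSubalgebra hC)
      (sub_mem (one_mem _) hrB) δ)
  · obtain ⟨hleft, hright⟩ := happrox x hx
    have hxε : δ * ‖x‖ + δ ≤ ε := by linarith [hδε x (Finset.mem_insert_of_mem hx), hδ_nonneg x]
    exact ⟨(hleft.of_norm_sub_le (norm_mul_sub_mul_right_le hsr x)).mono subset_rfl hxε,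
      (hright.of_norm_sub_le (norm_mul_sub_mul_left_le hsr x)).mono subset_rfl hxε⟩
  · linarith [norm_commutator_le_add hsr x, hcomm x hx, hδε x (Finset.mem_insert_of_mem hx),
      hδ_nonneg x]
  · rwa [sub_sub_cancel]
  · have hnorm_le_one {t : A} (ht : t ∈ Set.Icc 0 1) : ‖t‖ ≤ 1 :=
      (CStarAlgebra.norm_le_one_iff_of_nonneg t ht.1).2 ht.2
    linarith [norm_compression_le_add (hnorm_le_one hr) (hnorm_le_one hs) hsr a,
      hδε a (Finset.mem_insert_self a F)]

lemma memWTA_of_forall_exists_starSubalgebra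
    (h : ∀ ε : ℝ, 0 < ε → ∀ F : Finset A, ∀ a : A, 0 ≤ a → a ≠ 0 →
      ∃ B : StarSubalgebra ℂ A, B.toNonUnitalStarSubalgebra ∈ Ω ∧ IsClosed (B : Set A) ∧
        ∃ s ∈ B, s ∈ Set.Icc 0 1 ∧
          (∀ x ∈ F, ApproxIn (s * x) (B : Set A) ε ∧ ApproxIn (x * s) (B : Set A) ε) ∧
          (∀ x ∈ F, ‖s * x - x * s‖ < ε) ∧
          CuntzBelow (1 - s) a ∧
          ‖a‖ - ε ≤ ‖s * a * s‖) :
    MemWTA Ω := by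
  intro ε hε F a ha ha0
  obtain ⟨B, hBΩ, hB, s, hsB, ⟨hs0, hs1⟩, hconditions⟩ := h ε hε F a (isPos_iff_nonneg.1 ha) ha0
  refine ⟨B.toNonUnitalStarSubalgebra, hBΩ, hB, 1, one_mem B, .one A, mul_one 1, by simp, 1 - s,
    sub_mem (one_mem B) hsB, isPos_iff_nonneg.2 (sub_nonneg.2 hs1), ?_, ?_⟩
  · simpa only [sub_sub_cancel] using isPos_iff_nonneg.2 hs0
  · rw [sub_sub_cancel]
    exact hconditions

end TracialApproximation

theorem memWTA_unitization_of_memGTA_general (Ω : Set (NonUnitalStarSubalgebra ℂ A))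
    (h : MemGTA Ω) : MemWTA (unitizationClass Ω) := by
  let _ : PartialOrder A := CStarAlgebra.spectralOrder A
  have : StarOrderedRing A := CStarAlgebra.spectralOrderedRing A
  refine memWTA_of_forall_exists_starSubalgebra fun ε hε F a ha ha0 => ?_
  obtain ⟨C, hCΩ, hC, s, hsB, hs, happrox, hconditions⟩ :=
    h.exists_mem_adjoin_cuntzBelow_one_sub hε F ha ha0
  have hCB : (C : Set A) ⊆ StarAlgebra.adjoin ℂ (C : Set A) := StarAlgebra.subset_adjoin ℂ _
  exact ⟨_, adjoin_mem_unitizationClass hCΩ, isClosed_adjoin_nonUnitalStarSubalgebra hC, s, hsB, hs,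
    fun x hx => (happrox x hx).imp (·.mono hCB le_rfl) (·.mono hCB le_rfl), hconditions⟩

/-- Let `Ω` be a class of C*-algebras and let `Ω₁` be the class of
unital C*-algebras consisting of all C*-algebras isomorphic either to a unital
algebra in `Ω` or to the unitization of an algebra in `Ω`.  If `A` is a simple
unital C*-algebra in `GTAΩ`, then `A ∈ WTAΩ₁`. -/
theorem memWTA_unitization_of_memGTA
    (hA : IsSimpleCStarAlgebra A)
    (Ω : Set (NonUnitalStarSubalgebra ℂ A))
    (h : MemGTA Ω) :
    MemWTA {B : NonUnitalStarSubalgebra ℂ A | ∃ C ∈ Ω,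
      ((∃ e ∈ C, ∀ c ∈ C, e * c = c ∧ c * e = c) ∧ Nonempty (B ≃⋆ₐ[ℂ] C)) ∨
        Nonempty (B ≃⋆ₐ[ℂ] Unitization ℂ C)} :=
  memWTA_unitization_of_memGTA_general Ω h
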